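/- Assume the region where V = β is nonempty, that a cut-off function η with constant C_η exists, and that β ≥ c_β ε^{-2} for some c_β > 0. Then there is a constant C depending only on d, C_η and c_β such that every periodic Lipschitz function v : ℝ^d → ℝ satisfies ‖v‖² ≤ C (κ L^d)² (εL)² |||v|||². Consequently, the Rayleigh quotient E(v) := |||v|||²/‖v‖² satisfies E(v) ≥ C^{-1} (κ L^d)^{-2} (εL)^{-2} for every nonzero periodic Lipschitz v, i.e., the ground-state energy is bounded below by a constant times (κ² L^{2d} (εL)²)^{-1}. (Estimate (2.2) and Lemma 2.4 of the paper.) -/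

import Mathlib

open MeasureTheory Real
open scoped BigOperators RealInnerProductSpace

noncomputable section

/-- A function on `ℝ^d` is periodic if it is `ℤ^d`-periodic. -/
def ZPeriodic {d : ℕ} (f : (Fin d → ℝ) → ℝ) : Prop :=
  ∀ (x : Fin d → ℝ) (k : Fin d → ℤ), f (x + fun i => (k i : ℝ)) = f x

/-- The unit cell `[0,1)^d`. -/
def unitCell (d : ℕ) : Set (Fin d → ℝ) := Set.univ.pi fun _ => Set.Ico (0 : ℝ) 1

/-- Squared Euclidean norm `|∇f(x)|²` of the (a.e. defined) gradient of `f`. -/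
def gradSq {d : ℕ} (f : (Fin d → ℝ) → ℝ) (x : Fin d → ℝ) : ℝ :=
  ∑ i, (fderiv ℝ f x (Pi.single i 1)) ^ 2

/-- `‖v‖²`, the squared `L²` norm over the unit cell. -/
def l2sq {d : ℕ} (v : (Fin d → ℝ) → ℝ) : ℝ := ∫ x in unitCell d, (v x) ^ 2

/-- `‖∇v‖²_{L²([0,1)^d)}`. -/
def gradL2sq {d : ℕ} (v : (Fin d → ℝ) → ℝ) : ℝ := ∫ x in unitCell d, gradSq v x

/-- `|||v|||²`, the squared energy norm over the unit cell. -/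
def energySq {d : ℕ} (V v : (Fin d → ℝ) → ℝ) : ℝ :=
  ∫ x in unitCell d, (gradSq v x + V x * (v x) ^ 2)

/-- The open grid cell of side `ε` with lower-left corner `ε q`. -/
def gridCell {d : ℕ} (ε : ℝ) (q : Fin d → ℤ) : Set (Fin d → ℝ) :=
  {x | ∀ i, (q i : ℝ) * ε < x i ∧ x i < ((q i : ℝ) + 1) * ε}

/-- `V` is a periodic two-valued potential, constant on each (open) grid cell. -/
def IsGridPotential {d : ℕ} (ε α β : ℝ) (V : (Fin d → ℝ) → ℝ) : Prop :=
  ZPeriodic V ∧ (∀ x, V x = α ∨ V x = β) ∧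
    ∀ q : Fin d → ℤ, (∀ x ∈ gridCell ε q, V x = α) ∨ (∀ x ∈ gridCell ε q, V x = β)

/-- The axis-aligned closed cube of side `ε m` which is the union of the grid cells
`q + r`, `r ∈ {0, …, m-1}^d`. -/
def gridCube {d : ℕ} (ε : ℝ) (q : Fin d → ℤ) (m : ℕ) : Set (Fin d → ℝ) :=
  {x | ∀ i, (q i : ℝ) * ε ≤ x i ∧ x i ≤ ((q i : ℝ) + (m : ℝ)) * ε}

/-- An α-cube: a closed cube, union of grid cells, contained in `closure {V = α}`. -/
def IsAlphaCube {d : ℕ} (ε α : ℝ) (V : (Fin d → ℝ) → ℝ) (q : Fin d → ℤ) (m : ℕ) : Prop :=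
  1 ≤ m ∧ gridCube ε q m ⊆ closure {x | V x = α}

/-- A maximal α-cube: an α-cube maximal under inclusion among α-cubes. -/
def IsMaxAlphaCube {d : ℕ} (ε α : ℝ) (V : (Fin d → ℝ) → ℝ) (q : Fin d → ℤ) (m : ℕ) : Prop :=
  IsAlphaCube ε α V q m ∧ ∀ q' m', IsAlphaCube ε α V q' m' →
    gridCube ε q m ⊆ gridCube ε q' m' → gridCube ε q m = gridCube ε q' m'

/-- `ε L` is the largest side length of a maximal α-cube (with `L = 1` if no α-cube exists):
the maximal width of a potential valley. -/
def IsValleyWidth {d : ℕ} (ε α : ℝ) (V : (Fin d → ℝ) → ℝ) (L : ℕ) : Prop :=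
  IsGreatest {m | ∃ q, IsMaxAlphaCube ε α V q m} L ∨
    ((∀ q m, ¬ IsAlphaCube ε α V q m) ∧ L = 1)

/-- `κ` is the maximal number of maximal α-cubes containing a common α-grid cell. -/
def IsOverlapNumber {d : ℕ} (ε α : ℝ) (V : (Fin d → ℝ) → ℝ) (κ : ℕ) : Prop :=
  IsGreatest {n | ∃ q : Fin d → ℤ, (∀ x ∈ gridCell ε q, V x = α) ∧
    n = Nat.card {p : (Fin d → ℤ) × ℕ //
      IsMaxAlphaCube ε α V p.1 p.2 ∧ gridCell ε q ⊆ gridCube ε p.1 p.2}} κ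

/-- A cut-off function `η` with constant `Cη`: periodic, `C¹`, `[0,1]`-valued, equal to `1`
on every α-cell, vanishing on the closed concentric subcube of side `ε/2` of every β-cell,
with `‖∇η‖_∞ ≤ Cη / ε`. -/
structure IsCutoff {d : ℕ} (ε Cη α β : ℝ) (V η : (Fin d → ℝ) → ℝ) : Prop where
  periodic : ZPeriodic η
  contDiff : ContDiff ℝ 1 η
  mem_Icc : ∀ x, η x ∈ Set.Icc (0 : ℝ) 1
  eq_one : ∀ q : Fin d → ℤ, (∀ x ∈ gridCell ε q, V x = α) → ∀ x ∈ gridCell ε q, η x = 1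
  eq_zero : ∀ q : Fin d → ℤ, (∀ x ∈ gridCell ε q, V x = β) → ∀ x : Fin d → ℝ,
    (∀ i, ((q i : ℝ) + 1/4) * ε ≤ x i ∧ x i ≤ ((q i : ℝ) + 3/4) * ε) → η x = 0
  grad_le : ∀ x, ‖fderiv ℝ η x‖ ≤ Cη / ε

/-!
Let `ε L` be the largest side of a cube on which the potential equals `α`. A cube of side
`ε (L + 1)` contains a `β`-cell, so from almost every point `x` one of the `(L + 1) ^ d`
translations `x ↦ x + ε r`, `0 ≤ r i ≤ L`, leads to a point where the potential is `β`. There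
`v x ^ 2 ≤ 2 (v (x + ε r) - v x) ^ 2 + (2 / β) V (x + ε r) v (x + ε r) ^ 2`. Sum over all `r` and
integrate over the unit cell: by periodicity each of the last terms contributes `2 / β` times the
potential energy, while each squared difference contributes at most `d (ε L) ^ 2 ‖∇v‖ ^ 2`.
-/

section PeriodicIntegration

variable {d : ℕ} {f g v : (Fin d → ℝ) → ℝ}

theorem ZPeriodic.add_right (hf : ZPeriodic f) (a : Fin d → ℝ) : ZPeriodic fun x => f (x + a) :=
  fun x k => by simpa only [add_right_comm] using hf (x + a) k

theorem ZPeriodic.sub (hf : ZPeriodic f) (hg : ZPeriodic g) : ZPeriodic fun x => f x - g x :=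
  fun x k => congrArg₂ (· - ·) (hf x k) (hg x k)

theorem ZPeriodic.mul (hf : ZPeriodic f) (hg : ZPeriodic g) : ZPeriodic fun x => f x * g x :=
  fun x k => congrArg₂ (· * ·) (hf x k) (hg x k)

theorem ZPeriodic.pow (hf : ZPeriodic f) (n : ℕ) : ZPeriodic fun x => f x ^ n :=
  fun x k => congrArg (· ^ n) (hf x k)

theorem ZPeriodic.vadd_span_basisFun (hf : ZPeriodic f)
    (z : (Submodule.span ℤ (Set.range (Pi.basisFun ℝ (Fin d)))).toAddSubgroup) (x : Fin d → ℝ) :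
    f (z +ᵥ x) = f x := by
  obtain ⟨z, hz⟩ := z
  rw [Submodule.mem_toAddSubgroup, Module.Basis.mem_span_iff_repr_mem] at hz
  choose k hk using hz
  have hzk : z = fun i => (k i : ℝ) := funext fun i => by simpa using (hk i).symm
  change f (z + x) = f x
  rw [add_comm, hzk]
  exact hf x k

theorem ZPeriodic.setIntegral_unitCell_add_right (hf : ZPeriodic f) (a : Fin d → ℝ) :
    ∫ x in unitCell d, f (x + a) = ∫ x in unitCell d, f x := by
  have hcell := ZSpan.isAddFundamentalDomain' (Pi.basisFun ℝ (Fin d)) volume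
  rw [ZSpan.fundamentalDomain_pi_basisFun] at hcell
  change IsAddFundamentalDomain _ (unitCell d) volume at hcell
  have : Countable (Submodule.span ℤ (Set.range (Pi.basisFun ℝ (Fin d)))).toAddSubgroup :=
    inferInstanceAs (Countable (Submodule.span ℤ (Set.range (Pi.basisFun ℝ (Fin d)))))
  have himage := (measurePreserving_add_left volume a).setIntegral_image_emb
    (measurableEmbedding_addLeft a) f (unitCell d)
  calc ∫ x in unitCell d, f (x + a) = ∫ x in unitCell d, f (a + x) := by simp only [add_comm]
    _ = ∫ x in (a + ·) '' unitCell d, f x := himage.symm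
    _ = ∫ x in unitCell d, f x :=
        (hcell.vadd_of_comm a).setIntegral_eq hcell hf.vadd_span_basisFun

theorem unitCell_subset_Icc (d : ℕ) : unitCell d ⊆ Set.Icc 0 1 :=
  fun _ hx => ⟨fun i => (hx i trivial).1, fun i => (hx i trivial).2.le⟩

instance isFiniteMeasure_restrict_unitCell (d : ℕ) :
    IsFiniteMeasure (volume.restrict (unitCell d)) :=
  isFiniteMeasure_restrict.2
    ((measure_mono (unitCell_subset_Icc d)).trans_lt isCompact_Icc.measure_lt_top).ne

theorem integrableOn_unitCell_of_continuous (hf : Continuous f) : IntegrableOn f (unitCell d) :=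
  (hf.continuousOn.integrableOn_compact isCompact_Icc).mono_set (unitCell_subset_Icc d)

theorem integrableOn_unitCell_mul_of_abs_le {B : ℝ} (hg : AEStronglyMeasurable g volume)
    (hB : ∀ x, |g x| ≤ B) (hf : Continuous f) :
    IntegrableOn (fun x => g x * f x) (unitCell d) :=
  (integrableOn_unitCell_of_continuous hf).bdd_mul hg.restrict (.of_forall hB)

theorem l2sq_pos (hv : ZPeriodic v) (hc : Continuous v) (hne : v ≠ 0) : 0 < l2sq v := by
  obtain ⟨x₀, hx₀⟩ := Function.ne_iff.1 hne
  -- Translate a point where `v ≠ 0` to the centre of the cell, where it has a neighbourhood.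
  set w : (Fin d → ℝ) → ℝ := fun x => v (x + (x₀ - fun _ => 1 / 2)) ^ 2 with hw
  have hwc : Continuous w := by fun_prop
  have hopen : IsOpen (Function.support w ∩ Set.univ.pi fun _ => Set.Ioo (0 : ℝ) 1) :=
    hwc.isOpen_support.inter (isOpen_set_pi Set.finite_univ fun _ _ => isOpen_Ioo)
  have hcentre : (fun _ : Fin d => (1 / 2 : ℝ)) ∈
      Function.support w ∩ Set.univ.pi fun _ => Set.Ioo (0 : ℝ) 1 :=
    ⟨by simpa [hw] using hx₀, fun _ _ => ⟨by norm_num, by norm_num⟩⟩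
  rw [l2sq, ← (hv.pow 2).setIntegral_unitCell_add_right,
    setIntegral_pos_iff_support_of_nonneg_ae (.of_forall fun _ => sq_nonneg _)
      (integrableOn_unitCell_of_continuous hwc)]
  exact (hopen.measure_pos _ ⟨_, hcentre⟩).trans_le <| measure_mono <|
    Set.inter_subset_inter_right _ <| Set.pi_mono fun _ _ => Set.Ioo_subset_Ico_self

end PeriodicIntegration

section TranslationEstimate

variable {d : ℕ} {v : (Fin d → ℝ) → ℝ} {K : NNReal}

theorem gradSq_nonneg (v : (Fin d → ℝ) → ℝ) (x : Fin d → ℝ) : 0 ≤ gradSq v x :=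
  Finset.sum_nonneg fun _ _ => sq_nonneg _

theorem sq_fderiv_apply_le_mul_gradSq (v : (Fin d → ℝ) → ℝ) (h x : Fin d → ℝ) :
    (fderiv ℝ v x h) ^ 2 ≤ (∑ i, h i ^ 2) * gradSq v x := by
  have hcoord : fderiv ℝ v x h = ∑ i, h i * fderiv ℝ v x (Pi.single i 1) := by
    conv_lhs => rw [← (Pi.basisFun ℝ (Fin d)).sum_repr h]
    simp [map_sum]
  rw [hcoord]
  exact Finset.sum_mul_sq_le_sq_mul_sq _ _ _

theorem integrableOn_unitCell_sq_fderiv_apply (hK : LipschitzWith K v) (h : Fin d → ℝ) :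
    IntegrableOn (fun x => (fderiv ℝ v x h) ^ 2) (unitCell d) := by
  refine Integrable.of_bound (C := (K * ‖h‖) ^ 2)
    ((measurable_fderiv_apply_const ℝ v h).pow_const 2).aestronglyMeasurable
    (.of_forall fun x => ?_)
  rw [norm_pow]
  gcongr
  exact (fderiv ℝ v x).le_of_opNorm_le (norm_fderiv_le_of_lipschitz ℝ hK) h

theorem integrableOn_unitCell_gradSq (hK : LipschitzWith K v) :
    IntegrableOn (gradSq v) (unitCell d) :=
  integrable_finsetSum _ fun _ _ => integrableOn_unitCell_sq_fderiv_apply hK _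

theorem sq_translate_nsmul_sub_le (v : (Fin d → ℝ) → ℝ) (k x : Fin d → ℝ) (n : ℕ) :
    (v (x + n • k) - v x) ^ 2 ≤
      n * ∑ j ∈ Finset.range n, (v (x + j • k + k) - v (x + j • k)) ^ 2 := by
  have htelescope : v (x + n • k) - v x =
      ∑ j ∈ Finset.range n, (v (x + j • k + k) - v (x + j • k)) := by
    simpa only [succ_nsmul, ← add_assoc, zero_nsmul, add_zero] using
      (Finset.sum_range_sub (fun j => v (x + j • k)) n).symm
  rw [htelescope]
  simpa only [Finset.card_range] using sq_sum_le_card_mul_sum_sq (s := Finset.range n)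
    (f := fun j => v (x + j • k + k) - v (x + j • k))

theorem l2sq_translate_nsmul_sub_le (hv : ZPeriodic v) (hc : Continuous v) (k : Fin d → ℝ)
    (n : ℕ) :
    l2sq (fun x => v (x + n • k) - v x) ≤ (n : ℝ) ^ 2 * l2sq fun x => v (x + k) - v x := by
  have hstep : ZPeriodic fun x => (v (x + k) - v x) ^ 2 := ((hv.add_right k).sub hv).pow 2
  calc l2sq (fun x => v (x + n • k) - v x)
      ≤ ∫ x in unitCell d, n * ∑ j ∈ Finset.range n, (v (x + j • k + k) - v (x + j • k)) ^ 2 :=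
        integral_mono (integrableOn_unitCell_of_continuous (by fun_prop))
          (integrableOn_unitCell_of_continuous (by fun_prop))
          fun x => sq_translate_nsmul_sub_le v k x n
    _ = n * ∑ j ∈ Finset.range n, ∫ x in unitCell d, (v (x + j • k + k) - v (x + j • k)) ^ 2 := by
        rw [integral_const_mul, integral_finsetSum]
        exact fun _ _ => integrableOn_unitCell_of_continuous (by fun_prop)
    _ = n * ∑ _j ∈ Finset.range n, l2sq fun x => v (x + k) - v x := by
        congr 1
        exact Finset.sum_congr rfl fun j _ => hstep.setIntegral_unitCell_add_right (j • k)
    _ = (n : ℝ) ^ 2 * l2sq fun x => v (x + k) - v x := by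
        rw [Finset.sum_const, Finset.card_range, nsmul_eq_mul, ← mul_assoc, sq]

theorem abs_mul_translate_inv_smul_sub_le (hK : LipschitzWith K v) (h x : Fin d → ℝ) (n : ℕ) :
    |n * (v (x + (n : ℝ)⁻¹ • h) - v x)| ≤ K * ‖h‖ := by
  rcases n.eq_zero_or_pos with rfl | hn
  · simpa using mul_nonneg K.2 (norm_nonneg h)
  have hlip : |v (x + (n : ℝ)⁻¹ • h) - v x| ≤ K * ((n : ℝ)⁻¹ * ‖h‖) := by
    simpa [Real.dist_eq, norm_smul] using hK.dist_le_mul (x + (n : ℝ)⁻¹ • h) x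
  calc |n * (v (x + (n : ℝ)⁻¹ • h) - v x)|
      = n * |v (x + (n : ℝ)⁻¹ • h) - v x| := by rw [abs_mul, Nat.abs_cast]
    _ ≤ n * (K * ((n : ℝ)⁻¹ * ‖h‖)) := by gcongr
    _ = K * ‖h‖ := by field_simp

theorem tendsto_sq_mul_l2sq_translate_inv_smul_sub (hK : LipschitzWith K v) (h : Fin d → ℝ) :
    Filter.Tendsto (fun n : ℕ => (n : ℝ) ^ 2 * l2sq fun x => v (x + (n : ℝ)⁻¹ • h) - v x)
      Filter.atTop (nhds (∫ x in unitCell d, (fderiv ℝ v x h) ^ 2)) := by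
  have hc := hK.continuous
  simp only [l2sq, ← integral_const_mul, ← mul_pow]
  refine tendsto_integral_of_dominated_convergence (fun _ => (K * ‖h‖) ^ 2)
    (fun n => Continuous.aestronglyMeasurable (by fun_prop)) (integrable_const _)
    (fun n => .of_forall fun x => ?_) ?_
  · rw [norm_pow]
    gcongr
    exact abs_mul_translate_inv_smul_sub_le hK h x n
  · filter_upwards [ae_restrict_of_ae hK.ae_differentiableAt] with x hx
    exact (hx.hasFDerivAt.lim h
      (tendsto_norm_atTop_atTop.comp tendsto_natCast_atTop_atTop)).pow 2

theorem l2sq_translate_sub_le (hv : ZPeriodic v) (hK : LipschitzWith K v) (h : Fin d → ℝ) :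
    l2sq (fun x => v (x + h) - v x) ≤ (∑ i, h i ^ 2) * gradL2sq v := by
  have hsteps : ∀ᶠ n : ℕ in Filter.atTop, l2sq (fun x => v (x + h) - v x) ≤
      (n : ℝ) ^ 2 * l2sq fun x => v (x + (n : ℝ)⁻¹ • h) - v x := by
    filter_upwards [Filter.eventually_ne_atTop 0] with n hn
    have hsmul : n • (n : ℝ)⁻¹ • h = h := by
      rw [← Nat.cast_smul_eq_nsmul ℝ, smul_inv_smul₀ (Nat.cast_ne_zero.2 hn)]
    simpa only [hsmul] using l2sq_translate_nsmul_sub_le hv hK.continuous ((n : ℝ)⁻¹ • h) n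
  calc l2sq (fun x => v (x + h) - v x)
      ≤ ∫ x in unitCell d, (fderiv ℝ v x h) ^ 2 :=
        ge_of_tendsto (tendsto_sq_mul_l2sq_translate_inv_smul_sub hK h) hsteps
    _ ≤ ∫ x in unitCell d, (∑ i, h i ^ 2) * gradSq v x :=
        integral_mono (integrableOn_unitCell_sq_fderiv_apply hK h)
          ((integrableOn_unitCell_gradSq hK).const_mul _)
          fun x => sq_fderiv_apply_le_mul_gradSq v h x
    _ = (∑ i, h i ^ 2) * gradL2sq v := integral_const_mul _ _

end TranslationEstimate

section Covering

variable {d : ℕ} {V v : (Fin d → ℝ) → ℝ} {K : NNReal} {B b : ℝ}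

theorem energySq_nonneg (hV : ∀ x, 0 ≤ V x) (v : (Fin d → ℝ) → ℝ) : 0 ≤ energySq V v :=
  integral_nonneg fun x => add_nonneg (gradSq_nonneg v x) (mul_nonneg (hV x) (sq_nonneg _))

theorem energySq_eq_add (hVm : AEStronglyMeasurable V volume) (hVB : ∀ x, |V x| ≤ B)
    (hK : LipschitzWith K v) :
    energySq V v = gradL2sq v + ∫ x in unitCell d, V x * v x ^ 2 :=
  integral_add (integrableOn_unitCell_gradSq hK)
    (integrableOn_unitCell_mul_of_abs_le hVm hVB (hK.continuous.pow 2))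

theorem sq_le_two_mul_sq_sub_add {W : ℝ} (hb : 0 < b) (hbW : b ≤ W) (s t : ℝ) :
    s ^ 2 ≤ 2 * (t - s) ^ 2 + 2 / b * (W * t ^ 2) := by
  have ht : 2 * t ^ 2 ≤ 2 / b * (W * t ^ 2) := by
    calc 2 * t ^ 2 = 2 / b * (b * t ^ 2) := by field_simp
      _ ≤ 2 / b * (W * t ^ 2) := by gcongr
  nlinarith only [ht, sq_nonneg (2 * t - s)]

theorem integrableOn_unitCell_translate_terms (hVm : AEStronglyMeasurable V volume)
    (hVB : ∀ x, |V x| ≤ B) (hc : Continuous v) (b : ℝ) (a : Fin d → ℝ) :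
    IntegrableOn (fun x => 2 * (v (x + a) - v x) ^ 2) (unitCell d) ∧
      IntegrableOn (fun x => 2 / b * (V (x + a) * v (x + a) ^ 2)) (unitCell d) :=
  ⟨integrableOn_unitCell_of_continuous (by fun_prop),
    (integrableOn_unitCell_mul_of_abs_le (f := fun x => v (x + a) ^ 2)
      (hVm.comp_measurePreserving (measurePreserving_add_right volume a)) (fun _ => hVB _)
      (by fun_prop)).const_mul _⟩

theorem integral_translate_terms_le (hVper : ZPeriodic V) (hVm : AEStronglyMeasurable V volume)
    (hV0 : ∀ x, 0 ≤ V x) (hVB : ∀ x, |V x| ≤ B) (hv : ZPeriodic v) (hK : LipschitzWith K v)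
    (hb : 0 < b) {R : ℝ} {a : Fin d → ℝ} (ha : ∑ i, a i ^ 2 ≤ R) :
    ∫ x in unitCell d, (2 * (v (x + a) - v x) ^ 2 + 2 / b * (V (x + a) * v (x + a) ^ 2)) ≤
      (2 * R + 2 / b) * energySq V v := by
  obtain ⟨hint₁, hint₂⟩ := integrableOn_unitCell_translate_terms hVm hVB hK.continuous b a
  set P := ∫ x in unitCell d, V x * v x ^ 2
  have hP : 0 ≤ P := integral_nonneg fun x => mul_nonneg (hV0 x) (sq_nonneg _)
  have hG : 0 ≤ gradL2sq v := integral_nonneg (gradSq_nonneg v)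
  have hR : 0 ≤ R := (Finset.sum_nonneg fun _ _ => sq_nonneg _).trans ha
  have hdiff : ∫ x in unitCell d, (v (x + a) - v x) ^ 2 ≤ R * gradL2sq v :=
    (l2sq_translate_sub_le hv hK a).trans (by gcongr)
  calc ∫ x in unitCell d, (2 * (v (x + a) - v x) ^ 2 + 2 / b * (V (x + a) * v (x + a) ^ 2))
      = 2 * (∫ x in unitCell d, (v (x + a) - v x) ^ 2) + 2 / b * P := by
        rw [integral_add hint₁ hint₂, integral_const_mul, integral_const_mul,
          (hVper.mul (hv.pow 2)).setIntegral_unitCell_add_right a]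
    _ ≤ 2 * (R * gradL2sq v) + 2 / b * P := by gcongr
    _ ≤ 2 * (R * gradL2sq v) + 2 / b * P + (2 * R * P + 2 / b * gradL2sq v) :=
        le_add_of_nonneg_right (by positivity)
    _ = (2 * R + 2 / b) * energySq V v := by rw [energySq_eq_add hVm hVB hK]; ring

theorem l2sq_le_of_ae_exists_translate_le {ι : Type*} [Fintype ι] (hVper : ZPeriodic V)
    (hVm : AEStronglyMeasurable V volume) (hV0 : ∀ x, 0 ≤ V x) (hVB : ∀ x, |V x| ≤ B)
    (hv : ZPeriodic v) (hK : LipschitzWith K v) (hb : 0 < b) {R : ℝ} {s : ι → Fin d → ℝ}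
    (hs : ∀ r, ∑ i, s r i ^ 2 ≤ R) (hcover : ∀ᵐ x, ∃ r, b ≤ V (x + s r)) :
    l2sq v ≤ Fintype.card ι * (2 * R + 2 / b) * energySq V v := by
  have hc := hK.continuous
  set F : ι → (Fin d → ℝ) → ℝ := fun r x =>
    2 * (v (x + s r) - v x) ^ 2 + 2 / b * (V (x + s r) * v (x + s r) ^ 2)
  have hFint (r : ι) : IntegrableOn (F r) (unitCell d) :=
    have hint := integrableOn_unitCell_translate_terms hVm hVB hc b (s r)
    hint.1.add hint.2
  have hF0 (r : ι) (x : Fin d → ℝ) : 0 ≤ F r x := by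
    have := hV0 (x + s r)
    positivity
  have hpointwise : ∀ᵐ x, v x ^ 2 ≤ ∑ r, F r x := by
    filter_upwards [hcover] with x ⟨r, hr⟩
    exact (sq_le_two_mul_sq_sub_add hb hr _ _).trans
      (Finset.single_le_sum (fun r _ => hF0 r x) (Finset.mem_univ r))
  calc l2sq v ≤ ∫ x in unitCell d, ∑ r, F r x :=
        integral_mono_ae (integrableOn_unitCell_of_continuous (by fun_prop))
          (integrable_finsetSum _ fun r _ => hFint r) (ae_restrict_of_ae hpointwise)
    _ = ∑ r, ∫ x in unitCell d, F r x := integral_finsetSum _ fun r _ => hFint r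
    _ ≤ ∑ _r : ι, (2 * R + 2 / b) * energySq V v :=
        Finset.sum_le_sum fun r _ => integral_translate_terms_le hVper hVm hV0 hVB hv hK hb (hs r)
    _ = Fintype.card ι * (2 * R + 2 / b) * energySq V v := by
        rw [Finset.sum_const, Finset.card_univ, nsmul_eq_mul, mul_assoc]

end Covering

section Grid

variable {d : ℕ} {ε α β : ℝ} {V : (Fin d → ℝ) → ℝ}

theorem gridCell_eq_pi (ε : ℝ) (q : Fin d → ℤ) :
    gridCell ε q = Set.univ.pi fun i => Set.Ioo ((q i : ℝ) * ε) (((q i : ℝ) + 1) * ε) := by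
  ext x
  simp [gridCell]

theorem measurableSet_gridCell (ε : ℝ) (q : Fin d → ℤ) : MeasurableSet (gridCell ε q) := by
  rw [gridCell_eq_pi]
  exact MeasurableSet.univ_pi fun _ => measurableSet_Ioo

theorem ae_exists_mem_gridCell (d : ℕ) (hε : 0 < ε) :
    ∀ᵐ x : Fin d → ℝ, ∃ q : Fin d → ℤ, x ∈ gridCell ε q := by
  have hplane (i : Fin d) (k : ℤ) : ∀ᵐ x : Fin d → ℝ, x i ≠ k * ε := by
    rw [ae_iff]
    simpa [volume_pi] using
      Measure.pi_hyperplane (fun _ : Fin d => (volume : Measure ℝ)) i ((k : ℝ) * ε)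
  have hoff : ∀ᵐ x : Fin d → ℝ, ∀ (i : Fin d) (k : ℤ), x i ≠ k * ε :=
    ae_all_iff.2 fun i => ae_all_iff.2 (hplane i)
  filter_upwards [hoff] with x hx
  exact ⟨fun i => ⌊x i / ε⌋, fun i =>
    ⟨((le_div_iff₀ hε).1 (Int.floor_le _)).lt_of_ne (hx i _).symm,
      (div_lt_iff₀ hε).1 (Int.lt_floor_add_one _)⟩⟩

theorem IsGridPotential.aestronglyMeasurable (hV : IsGridPotential ε α β V) (hε : 0 < ε) :
    AEStronglyMeasurable V volume := by
  have hcover : ∀ᵐ x : Fin d → ℝ, x ∈ ⋃ q, gridCell ε q := by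
    simpa only [Set.mem_iUnion] using ae_exists_mem_gridCell d hε
  have hcell (q : Fin d → ℤ) : AEStronglyMeasurable V (volume.restrict (gridCell ε q)) := by
    obtain ⟨c, hc⟩ : ∃ c, ∀ x ∈ gridCell ε q, V x = c := (hV.2.2 q).elim (⟨α, ·⟩) (⟨β, ·⟩)
    exact aestronglyMeasurable_const.congr
      (ae_restrict_of_forall_mem (measurableSet_gridCell ε q) fun x hx => (hc x hx).symm)
  rw [← Measure.restrict_eq_self_of_ae_mem hcover]
  exact aestronglyMeasurable_iUnion_iff.2 hcell

theorem IsGridPotential.nonneg (hV : IsGridPotential ε α β V) (hα : 0 ≤ α) (hβ : 0 ≤ β)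
    (x : Fin d → ℝ) : 0 ≤ V x := by
  rcases hV.2.1 x with h | h <;> rwa [h]

theorem IsGridPotential.abs_le_max (hV : IsGridPotential ε α β V) (x : Fin d → ℝ) :
    |V x| ≤ max |α| |β| := by
  rcases hV.2.1 x with h | h <;> simp [h]

theorem gridCell_subset_gridCube_iff (hε : 0 < ε) {p q : Fin d → ℤ} {m : ℕ} :
    gridCell ε p ⊆ gridCube ε q m ↔ ∀ i, q i ≤ p i ∧ p i + 1 ≤ q i + m := by
  refine ⟨fun h i => ?_, fun h x hx i => ?_⟩
  · have hcentre : (fun i => ((p i : ℝ) + 1 / 2) * ε) ∈ gridCell ε p :=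
      fun i => ⟨by nlinarith only [hε], by nlinarith only [hε]⟩
    have hle : (q i : ℝ) ≤ p i + 1 / 2 := le_of_mul_le_mul_right (h hcentre i).1 hε
    have hge : (p i : ℝ) + 1 / 2 ≤ q i + m := le_of_mul_le_mul_right (h hcentre i).2 hε
    have hlt : (q i : ℝ) < (p i + 1 : ℤ) := by push_cast; linarith only [hle]
    have hgt : (p i : ℝ) < (q i + m : ℤ) := by push_cast; linarith only [hge]
    exact ⟨Int.lt_add_one_iff.1 (Int.cast_lt.1 hlt), Int.cast_lt.1 hgt⟩
  · have hle : (q i : ℝ) ≤ p i := by exact_mod_cast (h i).1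
    have hge : (p i : ℝ) + 1 ≤ q i + m := by exact_mod_cast (h i).2
    exact ⟨(mul_le_mul_of_nonneg_right hle hε.le).trans (hx i).1.le,
      (hx i).2.le.trans (mul_le_mul_of_nonneg_right hge hε.le)⟩

theorem gridCube_subset_gridCube_iff (hε : 0 < ε) {p q : Fin d → ℤ} {k m : ℕ} :
    gridCube ε p k ⊆ gridCube ε q m ↔ ∀ i, q i ≤ p i ∧ p i + k ≤ q i + m := by
  refine ⟨fun h i => ?_, fun h x hx i => ?_⟩
  · have hside (i : Fin d) : (p i : ℝ) * ε ≤ (p i + k) * ε := by gcongr; simp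
    have hlow := (h (a := fun i => (p i : ℝ) * ε) (fun i => ⟨le_rfl, hside i⟩) i).1
    have hhigh := (h (a := fun i => ((p i : ℝ) + k) * ε) (fun i => ⟨hside i, le_rfl⟩) i).2
    exact ⟨by exact_mod_cast le_of_mul_le_mul_right hlow hε,
      by exact_mod_cast le_of_mul_le_mul_right hhigh hε⟩
  · have hle : (q i : ℝ) ≤ p i := by exact_mod_cast (h i).1
    have hge : (p i : ℝ) + k ≤ q i + m := by exact_mod_cast (h i).2
    exact ⟨(mul_le_mul_of_nonneg_right hle hε.le).trans (hx i).1,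
      (hx i).2.trans (mul_le_mul_of_nonneg_right hge hε.le)⟩

theorem exists_fin_mem_Icc_mul {a t : ℝ} {m : ℕ} (hm : 1 ≤ m)
    (ht : t ∈ Set.Icc (a * ε) ((a + m) * ε)) :
    ∃ r : Fin m, t ∈ Set.Icc ((a + (r : ℕ)) * ε) ((a + (r : ℕ) + 1) * ε) := by
  induction m, hm using Nat.le_induction with
  | base => exact ⟨0, by simpa using ht⟩
  | succ m _ ih =>
    rcases le_total t ((a + m) * ε) with hle | hge
    · obtain ⟨r, hr⟩ := ih ⟨ht.1, hle⟩
      exact ⟨r.castSucc, hr⟩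
    · exact ⟨Fin.last m, hge, by simpa [add_assoc] using ht.2⟩

theorem exists_mem_closure_gridCell (hε : 0 < ε) {q : Fin d → ℤ} {m : ℕ} (hm : 1 ≤ m)
    {x : Fin d → ℝ} (hx : x ∈ gridCube ε q m) :
    ∃ r : Fin d → Fin m, x ∈ closure (gridCell ε fun i => q i + (r i : ℕ)) := by
  choose r hr using fun i => exists_fin_mem_Icc_mul hm (hx i)
  refine ⟨r, ?_⟩
  rw [gridCell_eq_pi, closure_pi_set]
  intro i _
  have hne : ((q i + (r i : ℕ) : ℤ) : ℝ) * ε ≠ (((q i + (r i : ℕ) : ℤ) : ℝ) + 1) * ε := by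
    simp [hε.ne']
  beta_reduce
  rw [closure_Ioo hne, Int.cast_add, Int.cast_natCast]
  exact hr i

end Grid

section AlphaCubes

variable {d : ℕ} {ε α β : ℝ} {V : (Fin d → ℝ) → ℝ} {q : Fin d → ℤ} {m L κ : ℕ}
  {x : Fin d → ℝ}

theorem isAlphaCube_of_forall_gridCell (hε : 0 < ε) (hm : 1 ≤ m)
    (h : ∀ r : Fin d → Fin m, ∀ x ∈ gridCell ε (fun i => q i + (r i : ℕ)), V x = α) :
    IsAlphaCube ε α V q m := by
  refine ⟨hm, fun x hx => ?_⟩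
  obtain ⟨r, hr⟩ := exists_mem_closure_gridCell hε hm hx
  exact closure_mono (h r) hr

theorem ZPeriodic.add_mem_closure_levelSet (hV : ZPeriodic V) (hx : x ∈ closure {y | V y = α})
    (k : Fin d → ℤ) : (x + fun i => (k i : ℝ)) ∈ closure {y | V y = α} :=
  map_mem_closure (f := fun y => y + fun i => (k i : ℝ)) (by fun_prop) hx
    fun y hy => (hV y k).trans hy

theorem IsAlphaCube.side_lt_one (h : IsAlphaCube ε α V q m) (hV : ZPeriodic V)
    (hx : x ∉ closure {y | V y = α}) : m * ε < 1 := by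
  by_contra! hside
  -- A cube of side at least `1` contains an integer translate of every point.
  set k : Fin d → ℤ := fun i => ⌈(q i : ℝ) * ε - x i⌉
  have hmem : (x + fun i => (k i : ℝ)) ∈ gridCube ε q m := fun i => by
    have hle : (q i : ℝ) * ε - x i ≤ k i := Int.le_ceil _
    have hlt : (k i : ℝ) < q i * ε - x i + 1 := Int.ceil_lt_add_one _
    simp only [Pi.add_apply]
    exact ⟨by linarith only [hle], by linarith only [hlt, hside]⟩
  have hback := hV.add_mem_closure_levelSet (h.2 hmem) (-k)
  exact hx (by simpa [add_assoc, funext_iff, Pi.add_def] using hback)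

theorem IsAlphaCube.le_floor_inv (h : IsAlphaCube ε α V q m) (hε : 0 < ε) (hV : ZPeriodic V)
    (hx : x ∉ closure {y | V y = α}) : m ≤ ⌊ε⁻¹⌋₊ :=
  Nat.le_floor (by rw [← one_div, le_div_iff₀ hε]; exact (h.side_lt_one hV hx).le)

theorem IsAlphaCube.exists_isMaxAlphaCube (h : IsAlphaCube ε α V q m) (hε : 0 < ε)
    (hV : ZPeriodic V) (hx : x ∉ closure {y | V y = α}) :
    ∃ q' m', IsMaxAlphaCube ε α V q' m' ∧ gridCube ε q m ⊆ gridCube ε q' m' ∧ m ≤ m' := by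
  classical
  let P : ℕ → Prop := fun k => ∃ q', IsAlphaCube ε α V q' k ∧ gridCube ε q m ⊆ gridCube ε q' k
  have hPm : P m := ⟨q, h, subset_rfl⟩
  set M := Nat.findGreatest P ⌊ε⁻¹⌋₊
  have hmN := h.le_floor_inv hε hV hx
  obtain ⟨q', hq', hsub⟩ : P M := Nat.findGreatest_spec hmN hPm
  refine ⟨q', M, ⟨hq', fun q'' m'' hq'' hsub' => hsub'.antisymm ?_⟩, hsub,
    Nat.le_findGreatest hmN hPm⟩
  have hm'' : m'' ≤ M :=
    Nat.le_findGreatest (hq''.le_floor_inv hε hV hx) ⟨q'', hq'', hsub.trans hsub'⟩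
  rw [gridCube_subset_gridCube_iff hε] at hsub' ⊢
  exact fun i => by have := hsub' i; omega

theorem IsValleyWidth.one_le (hL : IsValleyWidth ε α V L) : 1 ≤ L := by
  rcases hL with ⟨⟨_, hq⟩, _⟩ | ⟨_, rfl⟩
  exacts [hq.1.1, le_rfl]

theorem IsValleyWidth.exists_notMem_closure (hL : IsValleyWidth ε α V L) (hε : 0 < ε) :
    ∃ x, x ∉ closure {y | V y = α} := by
  by_contra! hdense
  have hall (q : Fin d → ℤ) {m : ℕ} (hm : 1 ≤ m) : IsAlphaCube ε α V q m :=
    ⟨hm, fun x _ => hdense x⟩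
  rcases hL with ⟨⟨q, hq⟩, hgreatest⟩ | ⟨hnone, _⟩
  · have hsucc := hall q (Nat.le_add_left 1 L)
    have heq : gridCube ε q L = gridCube ε q (L + 1) :=
      hq.2 q (L + 1) hsucc ((gridCube_subset_gridCube_iff hε).2 fun i => by omega)
    have hmax : IsMaxAlphaCube ε α V q (L + 1) := ⟨hsucc, heq ▸ hq.2⟩
    exact (hgreatest ⟨q, hmax⟩).not_gt L.lt_succ_self
  · exact hnone 0 1 (hall 0 le_rfl)

theorem IsValleyWidth.not_isAlphaCube_succ (hL : IsValleyWidth ε α V L) (hε : 0 < ε)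
    (hV : ZPeriodic V) (q : Fin d → ℤ) : ¬ IsAlphaCube ε α V q (L + 1) := by
  intro hcube
  obtain ⟨x, hx⟩ := hL.exists_notMem_closure hε
  rcases hL with ⟨_, hgreatest⟩ | ⟨hnone, _⟩
  · obtain ⟨q', m', hmax, _, hle⟩ := hcube.exists_isMaxAlphaCube hε hV hx
    exact (hgreatest ⟨q', hmax⟩).not_gt hle
  · exact hnone _ _ hcube

theorem IsValleyWidth.exists_beta_gridCell (hL : IsValleyWidth ε α V L) (hε : 0 < ε)
    (hV : IsGridPotential ε α β V) (q : Fin d → ℤ) :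
    ∃ r : Fin d → Fin (L + 1), ∀ x ∈ gridCell ε (fun i => q i + (r i : ℕ)), V x = β := by
  by_contra! hnone
  refine hL.not_isAlphaCube_succ hε hV.1 q
    (isAlphaCube_of_forall_gridCell hε (Nat.le_add_left 1 L) fun r => ?_)
  obtain ⟨x, hx, hne⟩ := hnone r
  exact (hV.2.2 _).resolve_right fun h => hne (h x hx)

theorem IsValleyWidth.ae_exists_translate_eq (hL : IsValleyWidth ε α V L) (hε : 0 < ε)
    (hV : IsGridPotential ε α β V) :
    ∀ᵐ x : Fin d → ℝ, ∃ r : Fin d → Fin (L + 1), V (x + fun i => ε * (r i : ℕ)) = β := by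
  filter_upwards [ae_exists_mem_gridCell d hε] with x ⟨q, hq⟩
  obtain ⟨r, hr⟩ := hL.exists_beta_gridCell hε hV q
  refine ⟨r, hr _ fun i => ?_⟩
  have hqi := hq i
  simp only [Pi.add_apply, Int.cast_add, Int.cast_natCast]
  exact ⟨by linarith only [hqi.1], by linarith only [hqi.2]⟩

theorem finite_isMaxAlphaCube_gridCell_subset (hε : 0 < ε) (hV : ZPeriodic V)
    (hx : x ∉ closure {y | V y = α}) (q : Fin d → ℤ) :
    {p : (Fin d → ℤ) × ℕ |
      IsMaxAlphaCube ε α V p.1 p.2 ∧ gridCell ε q ⊆ gridCube ε p.1 p.2}.Finite := by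
  set N := ⌊ε⁻¹⌋₊
  refine ((Set.finite_Icc (fun i => q i - N) q).prod (Set.finite_Iic N)).subset ?_
  rintro ⟨p, m⟩ ⟨hmax, hsub⟩
  have hmN : m ≤ N := hmax.1.le_floor_inv hε hV hx
  have hbounds := (gridCell_subset_gridCube_iff hε).1 hsub
  refine ⟨⟨fun i => ?_, fun i => (hbounds i).1⟩, hmN⟩
  have := (hbounds i).2
  dsimp only at this ⊢
  omega

theorem IsOverlapNumber.one_le (hκ : IsOverlapNumber ε α V κ) (hε : 0 < ε) (hV : ZPeriodic V)
    (hx : x ∉ closure {y | V y = α}) : 1 ≤ κ := by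
  obtain ⟨⟨q, hq, rfl⟩, _⟩ := hκ
  have hcube : IsAlphaCube ε α V q 1 :=
    isAlphaCube_of_forall_gridCell hε le_rfl fun r => by simpa using hq
  obtain ⟨q', m', hmax, hsub, _⟩ := hcube.exists_isMaxAlphaCube hε hV hx
  have hcell : gridCell ε q ⊆ gridCube ε q 1 :=
    (gridCell_subset_gridCube_iff hε).2 fun i => by simp
  have := (finite_isMaxAlphaCube_gridCell_subset hε hV hx q).to_subtype
  exact Nat.card_pos_iff.2 ⟨⟨⟨(q', m'), hmax, hcell.trans hsub⟩⟩, this⟩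

end AlphaCubes

section SpectralBound

variable {d : ℕ} {ε α β c : ℝ} {V v : (Fin d → ℝ) → ℝ} {K : NNReal} {L κ : ℕ}

theorem sum_sq_mul_fin_le (hε : 0 ≤ ε) (r : Fin d → Fin (L + 1)) :
    ∑ i, (ε * ((r i : ℕ) : ℝ)) ^ 2 ≤ d * (ε * L) ^ 2 := by
  calc ∑ i, (ε * ((r i : ℕ) : ℝ)) ^ 2 ≤ ∑ _i : Fin d, (ε * (L : ℝ)) ^ 2 := by
        gcongr with i
        exact (r i).is_le
    _ = d * (ε * L) ^ 2 := by simp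

theorem IsValleyWidth.l2sq_le (hL : IsValleyWidth ε α V L) (hε : 0 < ε) (hα : 0 ≤ α) (hβ : 0 < β)
    (hV : IsGridPotential ε α β V) (hv : ZPeriodic v) (hK : LipschitzWith K v) :
    l2sq v ≤ ((L : ℝ) + 1) ^ d * (2 * (d * (ε * L) ^ 2) + 2 / β) * energySq V v := by
  have hcover : ∀ᵐ x : Fin d → ℝ, ∃ r : Fin d → Fin (L + 1), β ≤ V (x + fun i => ε * (r i : ℕ)) :=
    (hL.ae_exists_translate_eq hε hV).mono fun _ ⟨r, hr⟩ => ⟨r, hr.ge⟩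
  simpa using l2sq_le_of_ae_exists_translate_le hV.1 (hV.aestronglyMeasurable hε)
    (hV.nonneg hα hβ.le) hV.abs_le_max hv hK hβ (sum_sq_mul_fin_le hε.le) hcover

theorem add_one_pow_mul_le (hε : 0 < ε) (hc : 0 < c) (hβ : c / ε ^ 2 ≤ β) (hL : 1 ≤ L) :
    ((L : ℝ) + 1) ^ d * (2 * (d * (ε * L) ^ 2) + 2 / β) ≤
      2 ^ d * (2 * d + 2 / c) * (L : ℝ) ^ d * (ε * L) ^ 2 := by
  have hβ0 : 0 < β := (by positivity : 0 < c / ε ^ 2).trans_le hβ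
  have hL' : (1 : ℝ) ≤ L := by exact_mod_cast hL
  have hpow : ((L : ℝ) + 1) ^ d ≤ 2 ^ d * (L : ℝ) ^ d := by
    rw [← mul_pow]
    gcongr
    linarith only [hL']
  have hinv : 2 / β ≤ 2 / c * (ε * L) ^ 2 :=
    calc 2 / β ≤ 2 / (c / ε ^ 2) := by gcongr
      _ = 2 / c * (ε * 1) ^ 2 := by field_simp
      _ ≤ 2 / c * (ε * L) ^ 2 := by gcongr
  calc ((L : ℝ) + 1) ^ d * (2 * (d * (ε * L) ^ 2) + 2 / β)
      ≤ 2 ^ d * (L : ℝ) ^ d * (2 * (d * (ε * L) ^ 2) + 2 / c * (ε * L) ^ 2) := by gcongr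
    _ = 2 ^ d * (2 * d + 2 / c) * (L : ℝ) ^ d * (ε * L) ^ 2 := by ring

theorem inv_le_energySq_div_l2sq {A : ℝ} (hA : 0 < A) (hv : ZPeriodic v) (hc : Continuous v)
    (hne : v ≠ 0) (h : l2sq v ≤ A * energySq V v) : A⁻¹ ≤ energySq V v / l2sq v := by
  rwa [le_div_iff₀ (l2sq_pos hv hc hne), inv_mul_le_iff₀ hA]

theorem statement1_general (d : ℕ) (c_β : ℝ) (hcβ : 0 < c_β) :
    ∃ C : ℝ, 0 < C ∧
      ∀ (ε α β : ℝ) (V : (Fin d → ℝ) → ℝ) (L : ℕ),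
        0 < ε → 0 ≤ α → IsGridPotential ε α β V → c_β / ε ^ 2 ≤ β → IsValleyWidth ε α V L →
        ∀ v : (Fin d → ℝ) → ℝ, ZPeriodic v → (∃ K : NNReal, LipschitzWith K v) →
          l2sq v ≤ C * (L : ℝ) ^ d * (ε * (L : ℝ)) ^ 2 * energySq V v ∧
            (v ≠ 0 →
              (C * (L : ℝ) ^ d * (ε * (L : ℝ)) ^ 2)⁻¹ ≤ energySq V v / l2sq v) := by
  refine ⟨2 ^ d * (2 * d + 2 / c_β), by positivity, ?_⟩
  rintro ε α β V L hε hα hV hβ hL v hv ⟨K, hK⟩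
  have hβ0 : 0 < β := (by positivity : 0 < c_β / ε ^ 2).trans_le hβ
  have hL0 : 0 < L := hL.one_le
  have hbound : l2sq v ≤
      2 ^ d * (2 * d + 2 / c_β) * (L : ℝ) ^ d * (ε * (L : ℝ)) ^ 2 * energySq V v :=
    (hL.l2sq_le hε hα hβ0 hV hv hK).trans <| mul_le_mul_of_nonneg_right
      (add_one_pow_mul_le hε hcβ hβ hL.one_le) (energySq_nonneg (hV.nonneg hα hβ0.le) v)
  exact ⟨hbound, fun hne => inv_le_energySq_div_l2sq (by positivity) hv hK.continuous hne hbound⟩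

theorem pow_le_sq_overlap_mul_pow (hε : 0 < ε) (hV : ZPeriodic V) (hL : IsValleyWidth ε α V L)
    (hκ : IsOverlapNumber ε α V κ) : (L : ℝ) ^ d ≤ ((κ : ℝ) * (L : ℝ) ^ d) ^ 2 := by
  obtain ⟨x, hx⟩ := hL.exists_notMem_closure hε
  have hκ1 : 1 ≤ κ := hκ.one_le hε hV hx
  exact_mod_cast (Nat.le_mul_of_pos_left (L ^ d) hκ1).trans (Nat.le_self_pow two_ne_zero _)

end SpectralBound

/-- estimate (2.2) and Lemma 2.4 of the paper: assuming the β-region is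
nonempty, a cut-off function with constant `Cη` exists, and `β ≥ c_β ε⁻²`, there is a
constant `C = C(d, Cη, c_β)` with `‖v‖² ≤ C (κ L^d)² (εL)² |||v|||²` for all periodic
Lipschitz `v`; consequently the Rayleigh quotient of every nonzero such `v` is bounded
below by `C⁻¹ (κ L^d)⁻² (εL)⁻²`. -/
theorem statement1 (d : ℕ) (hd : 1 ≤ d) (Cη c_β : ℝ) (hcβ : 0 < c_β) :
    ∃ C : ℝ, 0 < C ∧
      ∀ (ε α β : ℝ) (V : (Fin d → ℝ) → ℝ) (L κ : ℕ),
        0 < ε → (∃ n : ℕ, 0 < n ∧ ε * n = 1) →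
        0 ≤ α → α ≤ β →
        IsGridPotential ε α β V →
        (∃ q : Fin d → ℤ, ∀ x ∈ gridCell ε q, V x = β) →
        (∃ η : (Fin d → ℝ) → ℝ, IsCutoff ε Cη α β V η) →
        c_β / ε ^ 2 ≤ β →
        IsValleyWidth ε α V L → IsOverlapNumber ε α V κ →
        ∀ v : (Fin d → ℝ) → ℝ, ZPeriodic v → (∃ K : NNReal, LipschitzWith K v) →
          l2sq v ≤ C * ((κ : ℝ) * (L : ℝ) ^ d) ^ 2 * (ε * (L : ℝ)) ^ 2 * energySq V v ∧
            (v ≠ 0 →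
              (C * ((κ : ℝ) * (L : ℝ) ^ d) ^ 2 * (ε * (L : ℝ)) ^ 2)⁻¹ ≤
                energySq V v / l2sq v) := by
  obtain ⟨C, hC, hgeneral⟩ := statement1_general d c_β hcβ
  refine ⟨C, hC, fun ε α β V L κ hε _ hα hαβ hV _ _ hβ hL hκ v hv hK => ?_⟩
  obtain ⟨hbound, hrayleigh⟩ := hgeneral ε α β V L hε hα hV hβ hL v hv hK
  have hE : 0 ≤ energySq V v := energySq_nonneg (hV.nonneg hα (hα.trans hαβ)) v
  have hL0 : 0 < L := hL.one_le
  have hpow := pow_le_sq_overlap_mul_pow hε hV.1 hL hκ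
  exact ⟨hbound.trans (by gcongr), fun hne => le_trans (by gcongr) (hrayleigh hne)⟩

end
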